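/- Let α be a countable ordinal, δ = ω^(α+1), X = [1, δ] with the order topology, G the group of homeomorphisms of X, and π : G → Sym({1,2,…}) the group homomorphism determined by π(g)(m) = n iff g(ω^α·m) = ω^α·n. If N is a normal subgroup of G whose index, as a cardinal, is strictly less than 2^ℵ₀, then for every permutation σ of {1,2,…} there is g ∈ N with π(g) = σ; that is, π restricted to N is surjective. -/

import Mathlib

open Ordinal Topology

noncomputable section

/-- The ordinal interval `[1, γ]`, i.e. the set of ordinals `β` with `1 ≤ β ≤ γ`, with the
subspace topology induced from the order topology on `Ordinal` (equivalently, its order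
topology, since it is order-connected). -/
abbrev OrdIcc (γ : Ordinal) : Type _ := ↥(Set.Icc (1 : Ordinal) γ)

/-- The group of self-homeomorphisms of a topological space, under composition. -/
instance homeoGroup {Y : Type*} [TopologicalSpace Y] : Group (Y ≃ₜ Y) where
  mul f g := g.trans f
  one := Homeomorph.refl Y
  inv := Homeomorph.symm
  mul_assoc f g h := rfl
  one_mul f := Homeomorph.ext fun _ => rfl
  mul_one f := Homeomorph.ext fun _ => rfl
  inv_mul_cancel f := Homeomorph.ext fun x => f.symm_apply_apply x

/-- `X = [1, δ]` where `δ = ω^(α+1)`. -/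
abbrev Xsp (α : Ordinal) : Type _ := OrdIcc (omega0 ^ (α + 1))

lemma omega_pow_mul_mem (α : Ordinal) (m : ℕ+) :
    omega0 ^ α * ((m : ℕ) : Ordinal) ∈ Set.Icc (1 : Ordinal) (omega0 ^ (α + 1)) := by
  constructor
  · have h1 : (1 : Ordinal) ≤ omega0 ^ α := Order.one_le_iff_pos.2 (opow_pos _ omega0_pos)
    have h2 : (1 : Ordinal) ≤ ((m : ℕ) : Ordinal) := by exact_mod_cast m.one_le
    calc (1 : Ordinal) = 1 * 1 := (one_mul 1).symm
      _ ≤ omega0 ^ α * ((m : ℕ) : Ordinal) := mul_le_mul' h1 h2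
  · rw [Ordinal.add_one_eq_succ, Ordinal.opow_succ]
    exact mul_le_mul' le_rfl (Ordinal.nat_lt_omega0 m).le

/-- The point `ω^α·m` of `X` (for `m ≥ 1`). -/
def pt (α : Ordinal) (m : ℕ+) : Xsp α :=
  ⟨omega0 ^ α * ((m : ℕ) : Ordinal), omega_pow_mul_mem α m⟩

/-- `A_n = [ω^α·(n−1)+1, ω^α·n]`, as a subset of `X`. -/
def Ablock (α : Ordinal) (n : ℕ+) : Set (Xsp α) :=
  {x : Xsp α | (x : Ordinal) ∈
    Set.Icc (omega0 ^ α * (((n : ℕ) - 1 : ℕ) : Ordinal) + 1) (omega0 ^ α * ((n : ℕ) : Ordinal))}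

/-- The defining property of the homomorphism `π : G → Sym({1,2,…})`:
`π(g)(m) = n` iff `g(ω^α·m) = ω^α·n`. -/
def IsBlockPerm (α : Ordinal) (π : (Xsp α ≃ₜ Xsp α) → Equiv.Perm ℕ+) : Prop :=
  ∀ (g : Xsp α ≃ₜ Xsp α) (m : ℕ+), g (pt α m) = pt α (π g m)

/-!
`X` is the one-point compactification of countably many copies of `[1, ω^α]`, so permuting the
copies gives a section `s` of `π`. It remains to see that the composite of `s` with `G → G ⧸ N` is
trivial: an infinite symmetric group has no nontrivial homomorphism to a group with fewer than
`2^ℵ₀` elements. Indeed, let `φ` be such a homomorphism. Restricted to a power `H^ι` with `ι`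
infinite, it identifies two of the `2^ι` indicator functions with value `g`, and hence kills some
`f` with `f a = g`; commuting `f` with elements supported at `a`, it kills every commutator `⁅g, k⁆`
placed at `a`. A permutation fixing as many points as there are in the whole set can be placed in
this way in one fibre of `ℕ × ℤ × C`, where it is a commutator by a shift along `ℤ`; and every
permutation is a product of two permutations of this kind.
-/

section PermHom

open Cardinal
open Equiv (Perm)
open Function (fixedPoints)
open scoped commutatorElement

theorem exists_apply_eq_and_map_eq_one {ι G Q : Type*} [Infinite ι] [Group G] [Group Q]
    (φ : (ι → G) →* Q) (hQ : #Q < 𝔠) (g : G) : ∃ a f, f a = g ∧ φ f = 1 := by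
  have hnotinj : ¬ Function.Injective fun S : Set ι => φ (S.mulIndicator fun _ => g) := by
    intro hinj
    have hle := lift_mk_le_lift_mk_of_injective hinj
    rw [mk_set, lift_two_power] at hle
    have hι : (𝔠 : Cardinal) ≤ 2 ^ lift #ι := by
      rw [← two_power_aleph0]
      exact power_le_power_left two_ne_zero (aleph0_le_lift.2 (aleph0_le_mk ι))
    exact (lift_lt_continuum.2 hQ).not_ge (hι.trans hle)
  obtain ⟨S, T, hφ, hST⟩ := Function.not_injective_iff.1 hnotinj
  wlog hsub : ∃ a ∈ S, a ∉ T generalizing S T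
  · refine this T S hφ.symm hST.symm (Set.not_subset.1 fun hTS => hsub (Set.not_subset.1 ?_))
    exact fun hle => hST (hle.antisymm hTS)
  obtain ⟨a, haS, haT⟩ := hsub
  refine ⟨a, S.mulIndicator (fun _ => g) * (T.mulIndicator fun _ => g)⁻¹, ?_, ?_⟩
  · simp [haS, haT]
  · simpa [mul_inv_eq_one] using hφ

theorem exists_map_mulSingle_commutator_eq_one {ι G Q : Type*} [Infinite ι] [DecidableEq ι]
    [Group G] [Group Q] (φ : (ι → G) →* Q) (hQ : #Q < 𝔠) (g k : G) :
    ∃ a, φ (Pi.mulSingle a ⁅g, k⁆) = 1 := by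
  obtain ⟨a, f, rfl, hf⟩ := exists_apply_eq_and_map_eq_one φ hQ g
  have hcomm : Pi.mulSingle a ⁅f a, k⁆ = ⁅f, (Pi.mulSingle a k : ι → G)⁆ := by
    ext i
    rcases eq_or_ne i a with rfl | hi
    · simp [commutatorElement_def]
    · simp [commutatorElement_def, hi]
  exact ⟨a, by rw [hcomm, map_commutatorElement, hf, commutatorElement_one_left]⟩

/-- The permutation of `ι × B` that acts on each fibre `{i} × B` as `f i`. -/
def fiberwisePerm (ι B : Type*) : (ι → Perm B) →* Perm (ι × B) where
  toFun f := Equiv.prodCongrRight f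
  map_one' := rfl
  map_mul' _ _ := rfl

theorem fiberwisePerm_apply {ι B : Type*} (f : ι → Perm B) (x : ι × B) :
    fiberwisePerm ι B f x = (x.1, f x.1 x.2) :=
  rfl

theorem fiberwisePerm_mulSingle_apply {ι B : Type*} [DecidableEq ι] (a : ι) (g : Perm B) (b : B) :
    fiberwisePerm ι B (Pi.mulSingle a g) (a, b) = (a, g b) := by
  simp [fiberwisePerm_apply]

theorem fiberwisePerm_mulSingle_apply_of_ne {ι B : Type*} [DecidableEq ι] {a : ι} (g : Perm B)
    {x : ι × B} (hx : x.1 ≠ a) : fiberwisePerm ι B (Pi.mulSingle a g) x = x := by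
  simp [fiberwisePerm_apply, hx]

theorem isConj_fiberwisePerm_mulSingle {ι B : Type*} [DecidableEq ι] (a b : ι) (g : Perm B) :
    IsConj (fiberwisePerm ι B (Pi.mulSingle a g)) (fiberwisePerm ι B (Pi.mulSingle b g)) := by
  refine isConj_iff.2 ⟨Equiv.prodCongr (Equiv.swap a b) (Equiv.refl B), ?_⟩
  rw [mul_inv_eq_iff_eq_mul]
  ext1 ⟨i, x⟩
  simp only [Perm.mul_apply, fiberwisePerm_apply, Equiv.prodCongr_apply, Prod.map,
    Equiv.refl_apply, Pi.mulSingle_apply, Equiv.swap_apply_eq_iff, Equiv.swap_apply_right]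

theorem exists_commutator_eq_fiberwisePerm_mulSingle {B : Type*} (h : Perm B) :
    ∃ g k : Perm (ℤ × B), ⁅g, k⁆ = fiberwisePerm ℤ B (Pi.mulSingle 0 h) := by
  -- Conjugating `g` by the shift `k` undoes it on all fibres but the one over `0`.
  refine ⟨fiberwisePerm ℤ B fun j => if 0 ≤ j then h else 1,
    Equiv.prodCongr (Equiv.addRight 1) (Equiv.refl B), ?_⟩
  rw [commutatorElement_def, mul_inv_eq_iff_eq_mul, mul_inv_eq_iff_eq_mul]
  ext1 ⟨j, x⟩
  simp only [Perm.mul_apply, fiberwisePerm_apply, Equiv.prodCongr_apply, Prod.map,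
    Equiv.coe_addRight, Equiv.refl_apply, Pi.mulSingle_apply]
  rcases lt_trichotomy (j + 1) 0 with hj | hj | hj
  · simp [hj.ne, show ¬ 0 ≤ j by omega, hj.not_ge]
  · simp [hj, show ¬ 0 ≤ j by omega]
  · simp [hj.ne', show 0 ≤ j by omega, hj.le]

theorem map_fiberwisePerm_mulSingle_eq_one {ι B Q : Type*} [Infinite ι] [DecidableEq ι] [Group Q]
    (φ : Perm (ι × ℤ × B) →* Q) (hQ : #Q < 𝔠) (i : ι) (h : Perm B) :
    φ (fiberwisePerm ι _ (Pi.mulSingle i (fiberwisePerm ℤ B (Pi.mulSingle 0 h)))) = 1 := by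
  obtain ⟨g, k, hgk⟩ := exists_commutator_eq_fiberwisePerm_mulSingle h
  rw [← hgk]
  obtain ⟨a, ha⟩ := exists_map_mulSingle_commutator_eq_one (φ.comp (fiberwisePerm ι _)) hQ g k
  have hconj := φ.map_isConj (isConj_fiberwisePerm_mulSingle a i ⁅g, k⁆)
  rwa [← MonoidHom.comp_apply, ha, isConj_one_right] at hconj

section FullCardinality

variable {Ω : Type*}

theorem mk_eq_of_subset {A B : Set Ω} (hA : #A = #Ω) (h : A ⊆ B) : #B = #Ω :=
  (mk_set_le B).antisymm (hA.ge.trans (mk_le_mk_of_subset h))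

theorem mk_eq_or_mk_eq_of_mk_union_eq [Infinite Ω] {A B : Set Ω} (h : #(A ∪ B : Set Ω) = #Ω) :
    #A = #Ω ∨ #B = #Ω := by
  by_contra! hne
  have hA := lt_of_le_of_ne (mk_set_le A) hne.1
  have hB := lt_of_le_of_ne (mk_set_le B) hne.2
  exact ((mk_union_le A B).trans_lt (add_lt_of_lt (aleph0_le_mk Ω) hA hB)).ne h

theorem exists_disjoint_subsets_mk_eq [Infinite Ω] {A : Set Ω} (hA : #A = #Ω) :
    ∃ B ⊆ A, ∃ C ⊆ A, Disjoint B C ∧ #B = #Ω ∧ #C = #Ω := by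
  have hinf : A.Infinite := Set.infinite_coe_iff.1 (infinite_iff.2 (hA ▸ aleph0_le_mk Ω))
  obtain ⟨B, C, rfl, hdisj, hBC⟩ := hinf.exists_union_disjoint_cardinal_eq_of_infinite
  have hB : #B = #Ω := (mk_eq_or_mk_eq_of_mk_union_eq hA).elim id hBC.trans
  exact ⟨B, Set.subset_union_left, C, Set.subset_union_right, hdisj, hB, hBC ▸ hB⟩

theorem exists_equiv_nat_prod_int_prod [Infinite Ω] {C : Set Ω} (hC : #C = #Ω)
    (hC' : #(Cᶜ : Set Ω) = #Ω) : ∃ e : Ω ≃ ℕ × ℤ × C, ∀ c : C, e c = (0, 0, c) := by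
  let fiber (n : ℕ) : C ↪ ℕ × ℤ × C := ⟨fun c => (n, 0, c), fun _ _ h => by simpa using h⟩
  have hcard : #(ℕ × ℤ × C) = #Ω := by
    have := infinite_iff.2 (hC ▸ aleph0_le_mk Ω)
    simp [hC]
  have hrange : #((Set.range (fiber 0))ᶜ : Set _) = #(ℕ × ℤ × C) := by
    refine mk_eq_of_subset (A := Set.range (fiber 1)) ?_ ?_
    · rw [mk_range_eq _ (fiber 1).injective, hC, hcard]
    · rintro _ ⟨c, rfl⟩ ⟨d, hd⟩
      exact zero_ne_one (congrArg Prod.fst hd)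
  exact extend_function (fiber 0) (Cardinal.eq.1 (hC'.trans (hrange.trans hcard).symm))

theorem exists_perm_eqOn {S : Set Ω} {f : Ω → Ω} (hf : S.InjOn f)
    (hcard : #(Sᶜ : Set Ω) = #((f '' S)ᶜ : Set Ω)) : ∃ p : Perm Ω, S.EqOn p f := by
  rw [← Set.range_domRestrict] at hcard
  obtain ⟨p, hp⟩ := extend_function ⟨S.domRestrict f, hf.injective⟩ (Cardinal.eq.1 hcard)
  exact ⟨p, fun x hx => hp ⟨x, hx⟩⟩

theorem exists_eq_mul_mk_fixedPoints_eq_of_disjoint [Infinite Ω] {s : Perm Ω} {D C : Set Ω}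
    (hD : #D = #Ω) (hC : #C = #Ω) (hDC : Disjoint D C) (hsDC : Disjoint (s '' D) C) :
    ∃ p q : Perm Ω, s = p * q ∧ #(fixedPoints p) = #Ω ∧ #(fixedPoints q) = #Ω := by
  -- `p` is `s` on `D` and the identity on one half of `C`; the other half leaves room to extend it.
  obtain ⟨E, hEC, E', hE'C, hEE', hE, hE'⟩ := exists_disjoint_subsets_mk_eq hC
  obtain ⟨f, hfD, hfE⟩ : ∃ f : Ω → Ω, D.EqOn f s ∧ E.EqOn f id := by
    classical
    exact ⟨D.piecewise s id, D.piecewise_eqOn s id, fun x hx =>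
      D.piecewise_eq_of_notMem s id (hDC.notMem_of_mem_right (hEC hx))⟩
  have hinj : (D ∪ E).InjOn f := by
    refine (Set.injOn_union (hDC.mono_right hEC)).2
      ⟨hfD.injOn_iff.2 s.injective.injOn, hfE.injOn_iff.2 Function.injective_id.injOn, ?_⟩
    intro x hx y hy
    rw [hfD hx, hfE hy]
    exact hsDC.ne_of_mem (Set.mem_image_of_mem s hx) (hEC hy)
  have himage : f '' (D ∪ E) = s '' D ∪ E := by
    rw [Set.image_union, hfD.image_eq, hfE.image_eq, Set.image_id]
  have mk_compl {F : Set Ω} (hF : Disjoint F C) : #((F ∪ E)ᶜ : Set Ω) = #Ω :=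
    mk_eq_of_subset hE'
      (Set.disjoint_union_left.2 ⟨hF.mono_right hE'C, hEE'⟩).subset_compl_left
  obtain ⟨p, hp⟩ := exists_perm_eqOn hinj (by rw [himage, mk_compl hDC, mk_compl hsDC])
  refine ⟨p, p⁻¹ * s, (mul_inv_cancel_left p s).symm,
    mk_eq_of_subset hE fun x hx => (hp (.inr hx)).trans (hfE hx),
    mk_eq_of_subset hD fun x hx => ?_⟩
  rw [Function.mem_fixedPoints, Function.IsFixedPt, Perm.mul_apply, Perm.inv_eq_iff_eq,
    hp (.inl hx), hfD hx]

theorem exists_eq_mul_mk_fixedPoints_eq [Infinite Ω] (s : Perm Ω) :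
    ∃ p q : Perm Ω, s = p * q ∧ #(fixedPoints p) = #Ω ∧ #(fixedPoints q) = #Ω := by
  obtain ⟨A, -, C, -, hAC, hA, hC⟩ := exists_disjoint_subsets_mk_eq (mk_univ (α := Ω))
  obtain ⟨C₁, hC₁C, C₂, hC₂C, hC₁₂, hC₁, hC₂⟩ := exists_disjoint_subsets_mk_eq hC
  have hcover : A ∩ s ⁻¹' C₁ᶜ ∪ A ∩ s ⁻¹' C₂ᶜ = A := by
    rw [← Set.inter_union_distrib_left, ← Set.preimage_union, ← Set.compl_inter,
      hC₁₂.inter_eq, Set.compl_empty, Set.preimage_univ, Set.inter_univ]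
  have of_mk_eq {C' : Set Ω} (hC' : #C' = #Ω) (hC'C : C' ⊆ C)
      (hD : #(A ∩ s ⁻¹' C'ᶜ : Set Ω) = #Ω) :=
    exists_eq_mul_mk_fixedPoints_eq_of_disjoint hD hC'
      (hAC.mono Set.inter_subset_left hC'C)
      (Set.disjoint_left.2 <| Set.forall_mem_image.2 fun _ hx => hx.2)
  exact (mk_eq_or_mk_eq_of_mk_union_eq (hcover.symm ▸ hA)).elim
    (of_mk_eq hC₁ hC₁C) (of_mk_eq hC₂ hC₂C)

theorem exists_equiv_permCongrHom_fiberwisePerm_eq [Infinite Ω] {s : Perm Ω}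
    (hs : #(fixedPoints s) = #Ω) :
    ∃ (C : Set Ω) (e : ℕ × ℤ × C ≃ Ω) (h : Perm C),
      e.permCongrHom (fiberwisePerm ℕ _ (Pi.mulSingle 0 (fiberwisePerm ℤ C (Pi.mulSingle 0 h)))) =
        s := by
  obtain ⟨D, hDs, D', -, hDD', hD, hD'⟩ := exists_disjoint_subsets_mk_eq hs
  have hDc : #(Dᶜ : Set Ω) = #Ω := mk_eq_of_subset hD' hDD'.subset_compl_left
  obtain ⟨e, he⟩ := exists_equiv_nat_prod_int_prod hDc (by rwa [compl_compl])
  have hfix (x : Ω) (hx : x ∈ D) : s x = x := hDs hx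
  have hmem (x : Ω) : s x ∈ Dᶜ ↔ x ∈ Dᶜ := not_congr
    ⟨fun hx => s.injective (hfix _ hx) ▸ hx, fun hx => (hfix x hx).symm ▸ hx⟩
  refine ⟨Dᶜ, e.symm, s.subtypePerm hmem, Equiv.ext fun x => ?_⟩
  rw [Equiv.permCongrHom_coe, Equiv.permCongr_apply, Equiv.symm_symm, Equiv.symm_apply_eq]
  by_cases hx : x ∈ D
  · rw [hfix x hx]
    obtain ⟨⟨m, k, c⟩, rfl⟩ := e.symm.surjective x
    rw [e.apply_symm_apply]
    rcases eq_or_ne m 0 with rfl | hm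
    · have hk : k ≠ 0 := by
        rintro rfl
        rw [← he c, e.symm_apply_apply] at hx
        exact c.2 hx
      rw [fiberwisePerm_mulSingle_apply, fiberwisePerm_mulSingle_apply_of_ne _ hk]
    · exact fiberwisePerm_mulSingle_apply_of_ne _ hm
  · rw [he ⟨x, hx⟩, fiberwisePerm_mulSingle_apply, fiberwisePerm_mulSingle_apply]
    exact (he (s.subtypePerm hmem ⟨x, hx⟩)).symm

theorem map_eq_one_of_mk_fixedPoints_eq [Infinite Ω] {Q : Type*} [Group Q] (φ : Perm Ω →* Q)
    (hQ : #Q < 𝔠) {s : Perm Ω} (hs : #(fixedPoints s) = #Ω) : φ s = 1 := by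
  obtain ⟨C, e, h, rfl⟩ := exists_equiv_permCongrHom_fiberwisePerm_eq hs
  exact map_fiberwisePerm_mulSingle_eq_one (φ.comp e.permCongrHom.toMonoidHom) hQ 0 h

theorem perm_monoidHom_eq_one_of_mk_lt_continuum [Infinite Ω] {Q : Type*} [Group Q]
    (φ : Perm Ω →* Q) (hQ : #Q < 𝔠) : φ = 1 := by
  ext s
  obtain ⟨p, q, rfl, hp, hq⟩ := exists_eq_mul_mk_fixedPoints_eq s
  rw [map_mul, map_eq_one_of_mk_fixedPoints_eq φ hQ hp, map_eq_one_of_mk_fixedPoints_eq φ hQ hq,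
    mul_one, MonoidHom.one_apply]

end FullCardinality

end PermHom

/-- The map sending `(n, y)` to the `y`-th point of the `n`-th of the consecutive blocks
`(γ·(n−1), γ·n]`, which for `γ = ω^α` are the sets `A_n`. -/
def blockMap (γ : Ordinal) (p : ℕ+ × OrdIcc γ) : Ordinal :=
  γ * (p.1.natPred : Ordinal) + p.2

theorem mul_natPred_add_self (γ : Ordinal) (n : ℕ+) :
    γ * (n.natPred : Ordinal) + γ = γ * ((n : ℕ) : Ordinal) := by
  rw [← mul_add_one, ← Nat.cast_add_one, n.natPred_add_one]

theorem range_blockMap_mk (γ : Ordinal) (n : ℕ+) :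
    Set.range (fun y => blockMap γ (n, y)) =
      Set.Ioc (γ * (n.natPred : Ordinal)) (γ * ((n : ℕ) : Ordinal)) := by
  rw [← mul_natPred_add_self]
  ext x
  constructor
  · rintro ⟨⟨y, hy⟩, rfl⟩
    exact ⟨lt_add_of_pos_right _ (Order.one_le_iff_pos.1 hy.1), add_le_add_right hy.2 _⟩
  · rintro ⟨hlt, hle⟩
    obtain ⟨y, rfl⟩ := exists_add_of_le hlt.le
    exact ⟨⟨y, Order.one_le_iff_pos.2 (pos_of_lt_add_right hlt), le_of_add_le_add_left hle⟩, rfl⟩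

theorem isOpenEmbedding_blockMap_mk (γ : Ordinal) (n : ℕ+) :
    IsOpenEmbedding fun y => blockMap γ (n, y) := by
  have := isCompact_iff_compactSpace.1 (isCompact_Icc (a := 1) (b := γ))
  have hcont : Continuous fun y => blockMap γ (n, y) :=
    (isNormal_add_right (γ * (n.natPred : Ordinal))).continuous.comp continuous_subtype_val
  have hinj : Function.Injective fun y => blockMap γ (n, y) :=
    (add_right_injective (γ * (n.natPred : Ordinal))).comp Subtype.val_injective
  refine ⟨(hcont.isClosedEmbedding hinj).isEmbedding, ?_⟩
  rw [range_blockMap_mk, ← Set.Ioo_succ_right_eq_Ioc]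
  exact isOpen_Ioo

theorem monotone_mul_natCast (γ : Ordinal) : Monotone fun k : ℕ => γ * (k : Ordinal) :=
  fun _ _ h => mul_le_mul_right (Nat.cast_le.2 h) γ

theorem blockMap_injective (γ : Ordinal) : Function.Injective (blockMap γ) := by
  have hmem (p : ℕ+ × OrdIcc γ) : blockMap γ p ∈
      Set.Ioc (γ * (p.1.natPred : Ordinal)) (γ * ((Order.succ p.1.natPred : ℕ) : Ordinal)) := by
    rw [Order.succ_eq_add_one, PNat.natPred_add_one, ← range_blockMap_mk]
    exact Set.mem_range_self p.2
  rintro ⟨m, x⟩ ⟨n, y⟩ h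
  obtain rfl : m = n := by
    refine PNat.natPred_injective ((monotone_mul_natCast γ).pairwise_disjoint_on_Ioc_succ.eq ?_)
    exact Set.not_disjoint_iff.2 ⟨_, hmem (m, x), h ▸ hmem (n, y)⟩
  rw [(isOpenEmbedding_blockMap_mk γ m).injective h]

theorem range_blockMap (γ : Ordinal) : Set.range (blockMap γ) = Set.Ioo 0 (γ * ω) := by
  ext x
  constructor
  · rintro ⟨⟨n, y⟩, rfl⟩
    have hγ : 0 < γ := Order.one_le_iff_pos.1 (y.2.1.trans y.2.2)
    obtain ⟨hlt, hle⟩ := range_blockMap_mk γ n ▸ Set.mem_range_self y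
    exact ⟨zero_le.trans_lt hlt, hle.trans_lt (mul_lt_mul_of_pos_left (natCast_lt_omega0 n) hγ)⟩
  · rintro ⟨hpos, hlt⟩
    obtain ⟨_, hc, hlt⟩ := (lt_mul_iff_of_isSuccLimit isSuccLimit_omega0).1 hlt
    obtain ⟨n, rfl⟩ := lt_omega0.1 hc
    have hx : x ∈ Set.Ioc (γ * ((0 : ℕ) : Ordinal)) (γ * (n : Ordinal)) := by
      simpa using ⟨hpos, hlt.le⟩
    rw [← (monotone_mul_natCast γ).biUnion_Ico_Ioc_map_succ, Set.mem_iUnion₂] at hx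
    obtain ⟨i, -, hi⟩ := hx
    rw [← i.natPred_succPNat] at hi
    obtain ⟨y, hy⟩ := (range_blockMap_mk γ i.succPNat).ge hi
    exact ⟨_, hy⟩

theorem isOpenEmbedding_blockMap (γ : Ordinal) : IsOpenEmbedding (blockMap γ) :=
  .of_continuous_injective_isOpenMap
    (continuous_prod_of_discrete_left.2 fun n => (isOpenEmbedding_blockMap_mk γ n).continuous)
    (blockMap_injective γ)
    (isOpenMap_prod_of_discrete_left.2 fun n => (isOpenEmbedding_blockMap_mk γ n).isOpenMap)

theorem blockMap_mem_Icc (γ : Ordinal) (p : ℕ+ × OrdIcc γ) :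
    blockMap γ p ∈ Set.Icc 1 (γ * ω) :=
  have hp := (range_blockMap γ).le (Set.mem_range_self p)
  ⟨Order.one_le_iff_pos.2 hp.1, hp.2.le⟩

theorem range_codRestrict_blockMap {γ : Ordinal} (hmem : γ * ω ∈ Set.Icc 1 (γ * ω)) :
    Set.range (Set.codRestrict (blockMap γ) _ (blockMap_mem_Icc γ)) = {⟨γ * ω, hmem⟩}ᶜ := by
  ext ⟨x, hx⟩
  have hpos : 0 < x := Order.one_le_iff_pos.1 hx.1
  have hrange : x ∈ Set.range (blockMap γ) ↔ x ≠ γ * ω := by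
    rw [range_blockMap, Set.mem_Ioo, and_iff_right hpos, hx.2.lt_iff_ne]
  simpa [Subtype.ext_iff] using hrange

/-- The interval `[1, γ·ω]` as the one-point compactification of countably many copies of `[1, γ]`,
the point at infinity being `γ·ω`. -/
def onePointBlocksHomeomorph {γ : Ordinal} (hγ : 0 < γ) :
    OnePoint (ℕ+ × OrdIcc γ) ≃ₜ OrdIcc (γ * ω) :=
  have : CompactSpace (OrdIcc (γ * ω)) := isCompact_iff_compactSpace.1 isCompact_Icc
  OnePoint.equivOfIsEmbeddingOfRangeEq _ _
    ((isOpenEmbedding_blockMap γ).isEmbedding.codRestrict _ (blockMap_mem_Icc γ))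
    (range_codRestrict_blockMap ⟨Order.one_le_iff_pos.2 (mul_pos hγ omega0_pos), le_rfl⟩)

section PermuteCopies

variable {ι Y X : Type*} [TopologicalSpace ι] [DiscreteTopology ι] [TopologicalSpace Y]
  [TopologicalSpace X]

/-- The action of `Perm ι` on a one-point compactification `X` of `ι` many copies of `Y` by
permuting the copies. -/
def permuteCopies (h : OnePoint (ι × Y) ≃ₜ X) : Equiv.Perm ι →* (X ≃ₜ X) where
  toFun τ := (h.symm.trans
    (τ.toHomeomorphOfDiscrete.prodCongr (Homeomorph.refl Y)).onePointCongr).trans h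
  map_one' := Homeomorph.ext fun x => by
    change h (OnePoint.map id (h.symm x)) = x
    rw [OnePoint.map_id, id, h.apply_symm_apply]
  map_mul' τ τ' := Homeomorph.ext fun x => by
    change h (OnePoint.map (Prod.map τ id ∘ Prod.map τ' id) (h.symm x)) =
      h (OnePoint.map (Prod.map τ id) (h.symm (h (OnePoint.map (Prod.map τ' id) (h.symm x)))))
    rw [h.symm_apply_apply, OnePoint.map_comp, Function.comp_apply]

theorem permuteCopies_apply_coe (h : OnePoint (ι × Y) ≃ₜ X) (τ : Equiv.Perm ι) (i : ι) (y : Y) :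
    permuteCopies h τ (h ↑(i, y)) = h ↑(τ i, y) := by
  change h (OnePoint.map (Prod.map τ id) (h.symm (h ↑(i, y)))) = _
  rw [h.symm_apply_apply, OnePoint.map_some, Prod.map_apply, id]

end PermuteCopies

/-- The space `X = [1, ω^(α+1)]` as the one-point compactification of the copies `A_n` of
`[1, ω^α]`. -/
def xspHomeomorph (α : Ordinal) : OnePoint (ℕ+ × OrdIcc (ω ^ α)) ≃ₜ Xsp α :=
  (onePointBlocksHomeomorph (opow_pos α omega0_pos)).trans
    (Homeomorph.setCongr (by rw [opow_add_one]))

theorem pt_eq_xspHomeomorph (α : Ordinal) (h : ω ^ α ∈ Set.Icc 1 (ω ^ α)) (n : ℕ+) :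
    pt α n = xspHomeomorph α ↑(n, (⟨ω ^ α, h⟩ : OrdIcc (ω ^ α))) :=
  Subtype.ext (mul_natPred_add_self (ω ^ α) n).symm

theorem permuteCopies_xspHomeomorph_pt (α : Ordinal) (τ : Equiv.Perm ℕ+) (n : ℕ+) :
    permuteCopies (xspHomeomorph α) τ (pt α n) = pt α (τ n) := by
  have htop : ω ^ α ∈ Set.Icc 1 (ω ^ α) :=
    ⟨Order.one_le_iff_pos.2 (opow_pos α omega0_pos), le_rfl⟩
  rw [pt_eq_xspHomeomorph α htop, permuteCopies_apply_coe, pt_eq_xspHomeomorph α htop]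

theorem pt_injective (α : Ordinal) : Function.Injective (pt α) := fun m n h => by
  have h' := mul_left_cancel₀ (opow_pos α omega0_pos).ne' (Subtype.ext_iff.1 h)
  exact_mod_cast h'

theorem pi_restricted_to_normal_subgroup_surjective_general (α : Ordinal)
    (π : (Xsp α ≃ₜ Xsp α) → Equiv.Perm ℕ+) (hπ : IsBlockPerm α π)
    (N : Subgroup (Xsp α ≃ₜ Xsp α)) (hNnormal : N.Normal)
    (hN : Cardinal.mk ((Xsp α ≃ₜ Xsp α) ⧸ N) < 2 ^ Cardinal.aleph0)
    (σ : Equiv.Perm ℕ+) :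
    ∃ g ∈ N, π g = σ := by
  rw [Cardinal.two_power_aleph0] at hN
  let s := permuteCopies (xspHomeomorph α)
  have htriv : (QuotientGroup.mk' N).comp s = 1 := perm_monoidHom_eq_one_of_mk_lt_continuum _ hN
  refine ⟨s σ, (QuotientGroup.eq_one_iff _).1 (DFunLike.congr_fun htriv σ), ?_⟩
  ext1 m
  exact pt_injective α (by rw [← hπ, permuteCopies_xspHomeomorph_pt])

/-- With `π : G → Sym({1,2,…})` the homomorphism determined by
`π(g)(m) = n` iff `g(ω^α·m) = ω^α·n`: if `N` is a normal subgroup of `G` of index `< 2^ℵ₀`,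
then `π` restricted to `N` is surjective. -/
theorem pi_restricted_to_normal_subgroup_surjective (α : Ordinal)
    (hα : α.card ≤ Cardinal.aleph0)
    (π : (Xsp α ≃ₜ Xsp α) → Equiv.Perm ℕ+) (hπ : IsBlockPerm α π)
    (N : Subgroup (Xsp α ≃ₜ Xsp α)) (hNnormal : N.Normal)
    (hN : Cardinal.mk ((Xsp α ≃ₜ Xsp α) ⧸ N) < 2 ^ Cardinal.aleph0)
    (σ : Equiv.Perm ℕ+) :
    ∃ g ∈ N, π g = σ :=
  pi_restricted_to_normal_subgroup_surjective_general α π hπ N hNnormal hN σ
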